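/- arXiv:2204.09984 — 6 statements merged into one kernel-verified Lean document; each statement's English description precedes it below -/
import Mathlib

section
/- Let ψ be a balanced N-function with characteristics (γ₁, γ₂). Then the conjugate N-function ψ* is again a balanced N-function; more precisely, ψ* is C¹ on [0,∞) and C² on (0,∞) with (ψ*)''(t) > 0 for all t > 0, and (1/γ₂)·(ψ*)'(t) ≤ t·(ψ*)''(t) ≤ (1/γ₁)·(ψ*)'(t) for all t > 0. -/
open Real Filter Set Topology

noncomputable section

/-- An N-function: convex on `[0,∞)`, vanishing at `0`, positive on `(0,∞)`,
with `ψ t / t → 0` as `t → 0⁺` and `ψ t / t → ∞` as `t → ∞`. -/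
def IsNFunction (ψ : ℝ → ℝ) : Prop :=
  ConvexOn ℝ (Set.Ici 0) ψ ∧ ψ 0 = 0 ∧ (∀ t > 0, 0 < ψ t) ∧
    Filter.Tendsto (fun t => ψ t / t) (nhdsWithin 0 (Set.Ioi 0)) (nhds 0) ∧
    Filter.Tendsto (fun t => ψ t / t) Filter.atTop Filter.atTop

/-- A regular N-function: an N-function which is `C¹` on `[0,∞)`, `C²` on `(0,∞)`,
with `ψ'' t > 0` for all `t > 0`. -/
def IsRegularNFunction (ψ : ℝ → ℝ) : Prop :=
  IsNFunction ψ ∧ ContDiffOn ℝ 1 ψ (Set.Ici 0) ∧ ContDiffOn ℝ 2 ψ (Set.Ioi 0) ∧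
    ∀ t > 0, 0 < deriv (deriv ψ) t

/-- A balanced N-function with characteristics `(γ₁, γ₂)`. -/
def IsBalancedNFunction (ψ : ℝ → ℝ) (γ₁ γ₂ : ℝ) : Prop :=
  IsRegularNFunction ψ ∧ 0 < γ₁ ∧ γ₁ ≤ 1 ∧ 1 ≤ γ₂ ∧
    ∀ t > 0, γ₁ * deriv ψ t ≤ t * deriv (deriv ψ) t ∧
      t * deriv (deriv ψ) t ≤ γ₂ * deriv ψ t

/-- The conjugate N-function `ψ*(t) = sup_{s ≥ 0} (s·t − ψ(s))`. -/
def conjNF (ψ : ℝ → ℝ) (t : ℝ) : ℝ :=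
  ⨆ s : Set.Ici (0:ℝ), ((s : ℝ) * t - ψ s)

/-- `ψ` satisfies the Δ₂-condition with constant `K`. -/
def SatisfiesDelta2 (ψ : ℝ → ℝ) (K : ℝ) : Prop :=
  2 < K ∧ ∀ t ≥ (0:ℝ), ψ (2 * t) ≤ K * ψ t

/-- The derivative `ψ'_a(t) = ψ'(a+t)·t/(a+t)` of the shifted N-function. -/
def shiftDF (ψ : ℝ → ℝ) (a t : ℝ) : ℝ := deriv ψ (a + t) * t / (a + t)

/-- The shifted N-function `ψ_a(t) = ∫₀ᵗ ψ'(a+s)·s/(a+s) ds`. -/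
def shiftNF (ψ : ℝ → ℝ) (a t : ℝ) : ℝ := ∫ s in (0:ℝ)..t, shiftDF ψ a s

/-- Frobenius norm of a `d×n` real matrix. -/
def frobNorm {d n : ℕ} (P : Fin d → Fin n → ℝ) : ℝ :=
  Real.sqrt (∑ i : Fin d, ∑ j : Fin n, (P i j) ^ 2)

/-- Frobenius inner product `P : Q` of two `d×n` real matrices. -/
def frobInner {d n : ℕ} (P Q : Fin d → Fin n → ℝ) : ℝ :=
  ∑ i : Fin d, ∑ j : Fin n, P i j * Q i j

/-- `F(P) = √(φ'(|P|)/|P|)·P` (equal to `0` at `P = 0`). -/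
def FmapNF (φ : ℝ → ℝ) {d n : ℕ} (P : Fin d → Fin n → ℝ) : Fin d → Fin n → ℝ :=
  Real.sqrt (deriv φ (frobNorm P) / frobNorm P) • P

/-- `F*(P) = √((φ*)'(|P|)/|P|)·P` (equal to `0` at `P = 0`). -/
def FstarNF (φ : ℝ → ℝ) {d n : ℕ} (P : Fin d → Fin n → ℝ) : Fin d → Fin n → ℝ :=
  Real.sqrt (deriv (conjNF φ) (frobNorm P) / frobNorm P) • P

/-- The standard basis matrix with a `1` in entry `(k,l)`. -/
def basisMat {d n : ℕ} (k : Fin d) (l : Fin n) : Fin d → Fin n → ℝ :=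
  fun i j => if i = k ∧ j = l then 1 else 0

/-- `𝒜` has `φ`-structure with constants `(γ₃, γ₄)`. -/
def HasPhiStructure {d n : ℕ} (A : (Fin d → Fin n → ℝ) → (Fin d → Fin n → ℝ))
    (φ : ℝ → ℝ) (γ₃ γ₄ : ℝ) : Prop :=
  0 < γ₃ ∧ γ₃ ≤ 1 ∧ 1 < γ₄ ∧ Continuous A ∧
    ContDiffOn ℝ 1 A {P | P ≠ 0} ∧ A 0 = 0 ∧
    (∀ P : Fin d → Fin n → ℝ, P ≠ 0 → ∀ Q : Fin d → Fin n → ℝ,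
      γ₃ * (deriv φ (frobNorm P) / frobNorm P) * (frobNorm Q) ^ 2 ≤
        ∑ i : Fin d, ∑ j : Fin n, ∑ k : Fin d, ∑ l : Fin n,
          fderiv ℝ A P (basisMat k l) i j * Q i j * Q k l) ∧
    (∀ P : Fin d → Fin n → ℝ, P ≠ 0 → ∀ (i k : Fin d) (j l : Fin n),
      |fderiv ℝ A P (basisMat k l) i j| ≤ γ₄ * (deriv φ (frobNorm P) / frobNorm P))

theorem conjNF_eq_of_max {ψ : ℝ → ℝ} {t a : ℝ} (ha : 0 ≤ a)
    (hmax : ∀ s ≥ (0:ℝ), s * t - ψ s ≤ a * t - ψ a) : conjNF ψ t = a * t - ψ a := by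
  unfold conjNF
  have : Nonempty (Set.Ici (0:ℝ)) := ⟨⟨0, mem_Ici.2 le_rfl⟩⟩
  apply le_antisymm
  · exact ciSup_le fun s => hmax s s.2
  · refine le_ciSup (f := fun s : Set.Ici (0:ℝ) => (s:ℝ) * t - ψ s) ?_ ⟨a, ha⟩
    exact ⟨a * t - ψ a, by rintro _ ⟨s, rfl⟩; exact hmax s s.2⟩

/-- the conjugate of a balanced N-function with characteristics `(γ₁, γ₂)`
is a balanced N-function with characteristics `(1/γ₂, 1/γ₁)`; in particular `ψ*` is
`C¹` on `[0,∞)`, `C²` on `(0,∞)` with `(ψ*)'' > 0` there, and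
`(1/γ₂)·(ψ*)'(t) ≤ t·(ψ*)''(t) ≤ (1/γ₁)·(ψ*)'(t)` for all `t > 0`. -/
theorem conj_of_balanced_is_balanced (γ₁ γ₂ : ℝ) (ψ : ℝ → ℝ)
    (h : IsBalancedNFunction ψ γ₁ γ₂) :
    IsBalancedNFunction (conjNF ψ) (1 / γ₂) (1 / γ₁) := by
  obtain ⟨⟨⟨hconv, h0, hpos, hlim0, hlimtop⟩, -, hC2, hdd⟩, hγ1, hγ1', hγ2, hbal⟩ := h
  have hdiff : ∀ t > 0, HasDerivAt ψ (deriv ψ t) t := fun t ht =>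
    ((hC2.differentiableOn (by norm_num)).differentiableAt (Ioi_mem_nhds ht)).hasDerivAt
  have hdiff2 : ∀ t > 0, HasDerivAt (deriv ψ) (deriv (deriv ψ) t) t := fun t ht =>
    (differentiableAt_of_deriv_ne_zero (hdd t ht).ne').hasDerivAt
  have hddcont : ContinuousOn (deriv (deriv ψ)) (Ioi 0) := by
    have h2 : ContDiffOn ℝ (1 + 1) ψ (Ioi 0) := by
      rw [one_add_one_eq_two]; exact hC2
    exact ((contDiffOn_succ_iff_deriv_of_isOpen isOpen_Ioi).1 h2).2.2.continuousOn_deriv_of_isOpen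
      isOpen_Ioi le_rfl
  have hgcont : ContinuousOn (deriv ψ) (Ioi 0) := fun t ht =>
    (hdiff2 t ht).continuousAt.continuousWithinAt
  have hgmono : StrictMonoOn (deriv ψ) (Ioi 0) :=
    strictMonoOn_of_deriv_pos (convex_Ioi 0) hgcont (by
      intro x hx; rw [interior_Ioi] at hx; exact hdd x hx)
  -- tangent line inequality
  have htan : ∀ a > 0, ∀ s ≥ (0:ℝ), ψ a + deriv ψ a * (s - a) ≤ ψ s := by
    intro a ha s hs
    rcases lt_trichotomy s a with hlt | heq | hgt
    · have := hconv.slope_le_of_hasDerivAt (mem_Ici.2 hs) (mem_Ici.2 ha.le) hlt (hdiff a ha)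
      rw [slope_def_field, div_le_iff₀ (by linarith)] at this
      linarith
    · subst heq; simp
    · have := hconv.le_slope_of_hasDerivAt (mem_Ici.2 ha.le) (mem_Ici.2 hs) hgt (hdiff a ha)
      rw [slope_def_field, le_div_iff₀ (by linarith)] at this
      linarith
  have hglow : ∀ a > 0, ψ a / a ≤ deriv ψ a := by
    intro a ha
    have := htan a ha 0 le_rfl
    rw [div_le_iff₀ ha]; linarith
  have hgpos : ∀ a > 0, 0 < deriv ψ a := fun a ha =>
    lt_of_lt_of_le (div_pos (hpos a ha) ha) (hglow a ha)
  have hsmall : ∀ ε > 0, ∃ a > 0, ψ a / a < ε := by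
    intro ε hε
    have h1 := hlim0.eventually (gt_mem_nhds hε)
    obtain ⟨a, h2, h3⟩ := (h1.and self_mem_nhdsWithin).exists
    exact ⟨a, h3, h2⟩
  have hgsmall : ∀ ε > 0, ∃ a > 0, deriv ψ a < ε := by
    intro ε hε
    obtain ⟨b, hb, hbε⟩ := hsmall (ε / 2) (by linarith)
    refine ⟨b / 2, by linarith, ?_⟩
    have h1 := htan (b / 2) (by linarith) b hb.le
    have h2 := hpos (b / 2) (by linarith)
    rw [div_lt_iff₀ hb] at hbε
    by_contra hcon
    push Not at hcon
    nlinarith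
  have hsurj : ∀ t > 0, ∃ a > 0, deriv ψ a = t := by
    intro t ht
    obtain ⟨a, ha, hat⟩ := hgsmall t ht
    obtain ⟨b, hb1, hb2⟩ := ((hlimtop.eventually_ge_atTop t).and (eventually_ge_atTop a)).exists
    have hb : 0 < b := lt_of_lt_of_le ha hb2
    have hsub : Icc a b ⊆ Ioi 0 := fun x hx => lt_of_lt_of_le ha hx.1
    obtain ⟨c, hc, hct⟩ := intermediate_value_Icc hb2 (hgcont.mono hsub)
      ⟨hat.le, hb1.trans (hglow b hb)⟩
    exact ⟨c, hsub hc, hct⟩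
  choose! f hfpos hgf using hsurj
  have hfg : ∀ a > 0, f (deriv ψ a) = a := fun a ha =>
    hgmono.injOn (hfpos _ (hgpos a ha)) ha (hgf _ (hgpos a ha))
  have hfmono : StrictMonoOn f (Ioi 0) := by
    intro x hx y hy hxy
    rw [← hgmono.lt_iff_lt (hfpos x hx) (hfpos y hy), hgf x hx, hgf y hy]
    exact hxy
  have hfcont : ∀ t > 0, ContinuousAt f t := by
    intro t ht
    refine hfmono.continuousAt_of_image_mem_nhds (Ioi_mem_nhds ht) ?_
    refine mem_of_superset (Ioi_mem_nhds (hfpos t ht)) ?_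
    intro a ha
    exact ⟨deriv ψ a, hgpos a ha, hfg a ha⟩
  have hfderiv : ∀ t > 0, HasDerivAt f (deriv (deriv ψ) (f t))⁻¹ t := by
    intro t ht
    refine HasDerivAt.of_local_left_inverse (hfcont t ht) (hdiff2 _ (hfpos t ht))
      (hdd _ (hfpos t ht)).ne' ?_
    filter_upwards [Ioi_mem_nhds ht] with y hy using hgf y hy
  -- values of the conjugate
  have hmax : ∀ t > 0, ∀ s ≥ (0:ℝ), s * t - ψ s ≤ f t * t - ψ (f t) := by
    intro t ht s hs
    have := htan (f t) (hfpos t ht) s hs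
    rw [hgf t ht] at this
    linarith
  have hcpos : ∀ t > 0, conjNF ψ t = f t * t - ψ (f t) := fun t ht =>
    conjNF_eq_of_max (hfpos t ht).le (hmax t ht)
  have hψnn : ∀ s ≥ (0:ℝ), 0 ≤ ψ s := by
    intro s hs
    rcases hs.lt_or_eq with h1 | h1
    · exact (hpos s h1).le
    · rw [← h1, h0]
  have hcneg : ∀ t ≤ (0:ℝ), conjNF ψ t = 0 := by
    intro t ht
    rw [conjNF_eq_of_max (a := 0) le_rfl, h0]
    · simp
    · intro s hs
      have := hψnn s hs
      have := mul_nonneg hs (neg_nonneg.2 ht)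
      rw [h0]; linarith
  have hlow : ∀ t > 0, ∀ s ≥ (0:ℝ), s * t - ψ s ≤ conjNF ψ t := by
    intro t ht s hs
    rw [hcpos t ht]; exact hmax t ht s hs
  have hcposs : ∀ t > 0, 0 < conjNF ψ t := by
    intro t ht
    obtain ⟨a, ha, hat⟩ := hsmall t ht
    rw [div_lt_iff₀ ha] at hat
    have := hlow t ht a ha.le
    linarith
  -- the derivative of the conjugate, on the whole line
  let F : ℝ → ℝ := fun t => if 0 < t then f t else 0
  have hFpos : ∀ t > 0, F t = f t := fun t ht => if_pos ht
  have hFneg : ∀ t ≤ (0:ℝ), F t = 0 := fun t ht => if_neg (not_lt.2 ht)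
  have hFevp : ∀ t > 0, F =ᶠ[𝓝 t] f := by
    intro t ht
    filter_upwards [Ioi_mem_nhds ht] with y hy using hFpos y hy
  have hFnn : ∀ t, 0 ≤ F t := by
    intro t
    rcases lt_or_ge 0 t with h1 | h1
    · rw [hFpos t h1]; exact (hfpos t h1).le
    · rw [hFneg t h1]
  have hFmono : Monotone F := by
    intro x y hxy
    rcases lt_or_ge 0 x with h1 | h1
    · rw [hFpos x h1, hFpos y (h1.trans_le hxy)]
      exact hfmono.monotoneOn h1 (h1.trans_le hxy) hxy
    · rw [hFneg x h1]; exact hFnn y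
  have hFcont0 : ContinuousAt F 0 := by
    rw [Metric.continuousAt_iff']
    intro ε hε
    filter_upwards [Iio_mem_nhds (hgpos ε hε)] with y hy
    rw [hFneg 0 le_rfl, Real.dist_eq, sub_zero, abs_of_nonneg (hFnn y)]
    rcases lt_or_ge 0 y with h1 | h1
    · rw [hFpos y h1, ← hfg ε hε]
      exact hfmono h1 (hgpos ε hε) hy
    · rw [hFneg y h1]; exact hε
  have hFcont : Continuous F := by
    rw [continuous_iff_continuousAt]
    intro t
    rcases lt_trichotomy 0 t with h1 | h1 | h1
    · exact (hfcont t h1).congr (hFevp t h1).symm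
    · rw [← h1]; exact hFcont0
    · refine (continuousAt_const (y := (0:ℝ))).congr ?_
      filter_upwards [Iio_mem_nhds h1] with y hy using (hFneg y (le_of_lt hy)).symm
  have hbd : ∀ t, |conjNF ψ t| ≤ F t * t := by
    intro t
    rcases lt_or_ge 0 t with h1 | h1
    · rw [abs_of_pos (hcposs t h1), hFpos t h1, hcpos t h1]
      linarith [hpos _ (hfpos t h1)]
    · rw [hcneg t h1, hFneg t h1]; simp
  have hderne : ∀ t, t ≠ 0 → HasDerivAt (conjNF ψ) (F t) t := by
    intro t ht
    rcases lt_or_gt_of_ne ht with h1 | h1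
    · rw [hFneg t h1.le]
      refine (hasDerivAt_const t (0:ℝ)).congr_of_eventuallyEq ?_
      filter_upwards [Iio_mem_nhds h1] with y hy using hcneg y (le_of_lt hy)
    · rw [hFpos t h1]
      have hd := ((hfderiv t h1).mul (hasDerivAt_id t)).sub
        ((hdiff (f t) (hfpos t h1)).comp t (hfderiv t h1))
      rw [hgf t h1] at hd
      have hd2 := hd.congr_of_eventuallyEq (f₁ := conjNF ψ) (by
        filter_upwards [Ioi_mem_nhds h1] with y hy
        simpa using hcpos y hy)
      refine hd2.congr_deriv ?_
      simp only [id]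
      ring
  have hccont0 : ContinuousAt (conjNF ψ) 0 := by
    have h1 : Tendsto (fun t => F t * t) (𝓝 0) (𝓝 0) := by
      have := (hFcont.mul continuous_id).tendsto 0
      simpa [Pi.mul_def] using this
    have := squeeze_zero_norm (f := conjNF ψ) hbd h1
    rw [ContinuousAt, hcneg 0 le_rfl]
    exact this
  have hder : ∀ t, HasDerivAt (conjNF ψ) (F t) t := by
    intro t
    by_cases ht : t = 0
    · subst ht
      exact hasDerivAt_of_hasDerivAt_of_ne hderne hccont0 hFcont0
    · exact hderne t ht
  have hderiv : deriv (conjNF ψ) = F := funext fun t => (hder t).deriv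
  have hdiffc : Differentiable ℝ (conjNF ψ) := fun t => (hder t).differentiableAt
  have hFder : ∀ t > 0, HasDerivAt F (deriv (deriv ψ) (f t))⁻¹ t := fun t ht =>
    (hfderiv t ht).congr_of_eventuallyEq (hFevp t ht)
  have hFderiv : ∀ t > 0, deriv F t = (deriv (deriv ψ) (f t))⁻¹ := fun t ht => (hFder t ht).deriv
  refine ⟨⟨⟨?_, hcneg 0 le_rfl, hcposs, ?_, ?_⟩, ?_, ?_, ?_⟩, ?_, ?_, ?_, ?_⟩
  · have : ConvexOn ℝ univ (conjNF ψ) :=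
      Monotone.convexOn_univ_of_deriv hdiffc (by rw [hderiv]; exact hFmono)
    exact this.subset (subset_univ _) (convex_Ici 0)
  · have h1 : Tendsto F (𝓝[>] 0) (𝓝 0) := by
      have : Tendsto F (𝓝 0) (𝓝 (F 0)) := hFcont0
      rw [hFneg 0 le_rfl] at this
      exact this.mono_left nhdsWithin_le_nhds
    refine tendsto_of_tendsto_of_tendsto_of_le_of_le' tendsto_const_nhds h1 ?_ ?_
    · filter_upwards [self_mem_nhdsWithin] with t ht
      exact (div_pos (hcposs t ht) ht).le
    · filter_upwards [self_mem_nhdsWithin] with t ht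
      rw [div_le_iff₀ ht]
      exact (le_abs_self _).trans (hbd t)
  · rw [tendsto_atTop]
    intro M
    have hs : 0 ≤ |M| + 1 := by positivity
    filter_upwards [eventually_gt_atTop 0, eventually_ge_atTop (ψ (|M| + 1))] with t ht ht2
    rw [le_div_iff₀ ht]
    have h1 := hlow t ht _ hs
    have h2 := mul_le_mul_of_nonneg_right (le_abs_self M) ht.le
    linarith
  · refine (contDiff_one_iff_deriv.2 ⟨hdiffc, ?_⟩).contDiffOn
    rw [hderiv]; exact hFcont
  · have h2 : ContDiffOn ℝ (1 + 1) (conjNF ψ) (Ioi 0) := by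
      rw [contDiffOn_succ_iff_deriv_of_isOpen isOpen_Ioi, hderiv]
      refine ⟨hdiffc.differentiableOn, by simp, ?_⟩
      rw [← zero_add (1 : WithTop ℕ∞), contDiffOn_succ_iff_deriv_of_isOpen isOpen_Ioi]
      refine ⟨fun t ht => (hFder t ht).differentiableAt.differentiableWithinAt, by simp, ?_⟩
      rw [contDiffOn_zero]
      have hc : ContinuousOn (fun t => (deriv (deriv ψ) (f t))⁻¹) (Ioi 0) := by
        refine ContinuousOn.inv₀ ?_ fun t ht => (hdd _ (hfpos t ht)).ne'
        exact hddcont.comp (fun t ht => (hfcont t ht).continuousWithinAt) fun t ht => hfpos t ht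
      exact hc.congr fun t ht => hFderiv t ht
    rw [one_add_one_eq_two] at h2
    exact h2
  · intro t ht
    rw [hderiv, hFderiv t ht]
    exact inv_pos.2 (hdd _ (hfpos t ht))
  · positivity
  · rw [div_le_one (by linarith)]; exact hγ2
  · rw [le_div_iff₀ hγ1]; linarith
  · intro t ht
    rw [hderiv, hFderiv t ht, hFpos t ht]
    obtain ⟨h1, h2⟩ := hbal (f t) (hfpos t ht)
    rw [hgf t ht] at h1 h2
    have hD := hdd _ (hfpos t ht)
    have hγ2' : 0 < γ₂ := by linarith
    rw [← div_eq_mul_inv, div_mul_eq_mul_div, div_mul_eq_mul_div, one_mul,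
      div_le_div_iff₀ hγ2' hD, div_le_div_iff₀ hD hγ1]
    constructor <;> linarith

end
end

section
/- Let φ be a balanced N-function with characteristics (γ₁, γ₂). Then the function κ : [0,∞) → [0,∞) defined by κ(t) := ∫₀ᵗ √(φ'(s)·s) ds is a balanced N-function with characteristics ((1+γ₁)/2, (1+γ₂)/2); that is, κ is a regular N-function and ((1+γ₁)/2)·κ'(t) ≤ t·κ''(t) ≤ ((1+γ₂)/2)·κ'(t) for all t > 0. -/
open Real Filter Set Topology

noncomputable section

lemma kappa_aux (γ₁ γ₂ : ℝ) (φ κ G : ℝ → ℝ)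
    (h : IsBalancedNFunction φ γ₁ γ₂)
    (hG : ∀ t > 0, G t = Real.sqrt (deriv φ t * t)) (hG0 : G 0 = 0) (hGc : Continuous G)
    (hK : ∀ t, 0 ≤ t → κ t = ∫ s in (0:ℝ)..t, G s) :
    IsBalancedNFunction κ ((1 + γ₁) / 2) ((1 + γ₂) / 2) := by
  obtain ⟨⟨-, -, h2, hpos⟩, hγ1, hγ1', hγ2, hb⟩ := h
  have hφ' : ∀ t > 0, 0 < deriv φ t := by
    intro t ht
    have h1 := mul_pos ht (hpos t ht)
    have h3 := (hb t ht).2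
    by_contra hc
    nlinarith
  have hC1 : ContDiffOn ℝ 1 (deriv φ) (Ioi 0) :=
    ((contDiffOn_succ_iff_deriv_of_isOpen (n := 1) isOpen_Ioi).1 h2).2.2
  have hd : ∀ t > 0, HasDerivAt (deriv φ) (deriv (deriv φ) t) t := fun t ht =>
    ((hC1.differentiableOn one_ne_zero).differentiableAt (Ioi_mem_nhds ht)).hasDerivAt
  have hmono : StrictMonoOn (deriv φ) (Ioi 0) := by
    apply strictMonoOn_of_deriv_pos (convex_Ioi 0) hC1.continuousOn
    intro x hx
    rw [interior_Ioi] at hx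
    exact hpos x hx
  have hGpos : ∀ t > 0, 0 < G t := by
    intro t ht
    rw [hG t ht]
    exact Real.sqrt_pos.2 (mul_pos (hφ' t ht) ht)
  have hGsq : ∀ t > 0, G t * G t = deriv φ t * t := by
    intro t ht
    rw [hG t ht]
    exact Real.mul_self_sqrt (mul_pos (hφ' t ht) ht).le
  have hGd : ∀ t > 0, HasDerivAt G ((deriv (deriv φ) t * t + deriv φ t) / (2 * G t)) t := by
    intro t ht
    have h3 := ((hd t ht).mul (hasDerivAt_id t)).sqrt (mul_pos (hφ' t ht) ht).ne'
    have h4 : HasDerivAt (fun t => Real.sqrt (deriv φ t * t))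
        ((deriv (deriv φ) t * t + deriv φ t) / (2 * G t)) t := by
      rw [hG t ht]
      simpa using h3
    apply h4.congr_of_eventuallyEq
    filter_upwards [Ioi_mem_nhds ht] with s hs using hG s hs
  have hGC1 : ContDiffOn ℝ 1 G (Ioi 0) := by
    have : ContDiffOn ℝ 1 (fun t => Real.sqrt (deriv φ t * t)) (Ioi 0) :=
      (hC1.mul contDiffOn_id).sqrt (fun t ht => (mul_pos (hφ' t ht) ht).ne')
    exact this.congr (fun t ht => hG t ht)
  set K : ℝ → ℝ := fun t => ∫ s in (0:ℝ)..t, G s with hKdef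
  have hKd : ∀ t, HasDerivAt K (G t) t := fun t =>
    intervalIntegral.integral_hasDerivAt_right (hGc.intervalIntegrable _ _)
      (hGc.stronglyMeasurableAtFilter _ _) hGc.continuousAt
  have hKderiv : deriv K = G := funext fun t => (hKd t).deriv
  have hK1 : ContDiff ℝ 1 K := by
    rw [contDiff_one_iff_deriv, hKderiv]
    exact ⟨fun t => (hKd t).differentiableAt, hGc⟩
  have hK2 : ContDiffOn ℝ 2 K (Ioi 0) := by
    apply (contDiffOn_succ_iff_deriv_of_isOpen (n := 1) isOpen_Ioi).2
    refine ⟨fun t _ => (hKd t).differentiableAt.differentiableWithinAt, by simp, ?_⟩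
    rw [hKderiv]; exact hGC1
  have hκev : ∀ t > 0, κ =ᶠ[𝓝 t] K := by
    intro t ht
    filter_upwards [Ioi_mem_nhds ht] with s hs using hK s (le_of_lt hs)
  have hκd : ∀ t > 0, deriv κ t = G t := by
    intro t ht
    rw [(hκev t ht).deriv_eq, hKderiv]
  have hκd2 : ∀ t > 0, deriv (deriv κ) t =
      (deriv (deriv φ) t * t + deriv φ t) / (2 * G t) := by
    intro t ht
    rw [(hκev t ht).deriv.deriv_eq, hKderiv, (hGd t ht).deriv]
  have hGmono : MonotoneOn G (Ioi 0) := by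
    intro a ha b hb' hab
    rw [hG a ha, hG b hb']
    exact Real.sqrt_le_sqrt (mul_le_mul (hmono.monotoneOn ha hb' hab) hab (le_of_lt ha)
      (hφ' b hb').le)
  have hK0 : K 0 = 0 := by simp [hKdef]
  have hKpos : ∀ t > 0, 0 < K t := fun t ht =>
    intervalIntegral.intervalIntegral_pos_of_pos_on (hGc.intervalIntegrable _ _)
      (fun x hx => hGpos x hx.1) ht
  refine ⟨⟨⟨?_, ?_, ?_, ?_, ?_⟩, ?_, ?_, ?_⟩, by linarith, by linarith, by linarith, ?_⟩
  · have : ConvexOn ℝ (Ici 0) K := by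
      apply MonotoneOn.convexOn_of_deriv (convex_Ici 0) hK1.continuous.continuousOn
      · exact fun t _ => (hKd t).differentiableAt.differentiableWithinAt
      · rw [hKderiv, interior_Ici]; exact hGmono
    exact this.congr (fun t ht => (hK t ht).symm)
  · rw [hK 0 le_rfl]; exact hK0
  · intro t ht
    rw [hK t ht.le]; exact hKpos t ht
  · have h3 := (hasDerivAt_iff_tendsto_slope.1 (hKd 0))
    rw [hG0] at h3
    have h4 := h3.mono_left (nhdsWithin_mono (0:ℝ) (s := Ioi 0) (t := {0}ᶜ)
      (fun x hx => ne_of_gt hx))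
    refine h4.congr' ?_
    filter_upwards [self_mem_nhdsWithin] with t ht
    rw [slope_def_field, hK0, hK t (le_of_lt ht), sub_zero, sub_zero]
  · have h3 : Tendsto (fun t : ℝ => Real.sqrt (deriv φ 1 * (t / 2)) / 2) atTop atTop := by
      apply Tendsto.atTop_div_const two_pos
      apply Real.tendsto_sqrt_atTop.comp
      apply Tendsto.const_mul_atTop (hφ' 1 one_pos)
      exact tendsto_id.atTop_div_const two_pos
    refine tendsto_atTop_mono' _ ?_ h3
    filter_upwards [eventually_ge_atTop (2:ℝ)] with t ht
    obtain ⟨c, hc, hc'⟩ := exists_hasDerivAt_eq_slope K G (a := t / 2) (b := t) (by linarith)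
      hK1.continuous.continuousOn (fun x _ => hKd x)
    have hc1 : 1 ≤ c := by linarith [hc.1]
    have hc0 : 0 < c := by linarith
    have h5 : Real.sqrt (deriv φ 1 * (t / 2)) ≤ G c := by
      rw [hG c hc0]
      apply Real.sqrt_le_sqrt
      exact mul_le_mul (hmono.monotoneOn (mem_Ioi.2 one_pos) hc0 hc1) hc.1.le (by linarith)
        (hφ' c hc0).le
    have h6 := hKpos (t / 2) (by linarith)
    rw [hK t (by linarith)]
    change _ ≤ K t / t
    rw [eq_div_iff (by linarith)] at hc'
    rw [le_div_iff₀ (by linarith)]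
    nlinarith
  · exact hK1.contDiffOn.congr (fun t ht => hK t ht)
  · exact hK2.congr (fun t ht => hK t (le_of_lt ht))
  · intro t ht
    rw [hκd2 t ht]
    have := hpos t ht
    have := hφ' t ht
    have := hGpos t ht
    positivity
  · intro t ht
    rw [hκd2 t ht, hκd t ht]
    have h3 := hGpos t ht
    have h4 := hGsq t ht
    obtain ⟨h5, h6⟩ := hb t ht
    rw [mul_div_assoc']
    constructor
    · rw [le_div_iff₀ (by positivity)]
      have : (1 + γ₁) / 2 * G t * (2 * G t) = (1 + γ₁) * (deriv φ t * t) := by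
        rw [← h4]; ring
      nlinarith
    · rw [div_le_iff₀ (by positivity)]
      have : (1 + γ₂) / 2 * G t * (2 * G t) = (1 + γ₂) * (deriv φ t * t) := by
        rw [← h4]; ring
      nlinarith

/-- for a balanced N-function `φ` with characteristics `(γ₁, γ₂)`, the
potential `κ(t) = ∫₀ᵗ √(φ'(s)·s) ds` is a balanced N-function with characteristics
`((1+γ₁)/2, (1+γ₂)/2)`. -/
theorem potential_kappa_balanced (γ₁ γ₂ : ℝ) (φ : ℝ → ℝ)
    (h : IsBalancedNFunction φ γ₁ γ₂) :
    IsBalancedNFunction (fun t => ∫ s in (0:ℝ)..t, Real.sqrt (deriv φ s * s))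
      ((1 + γ₁) / 2) ((1 + γ₂) / 2) := by
  have h1 : ContDiffOn ℝ 1 φ (Ici 0) := h.1.2.1
  have hc : ContinuousOn (derivWithin φ (Ici 0)) (Ici 0) :=
    h1.continuousOn_derivWithin (uniqueDiffOn_Ici 0) le_rfl
  have heq : ∀ t > 0, derivWithin φ (Ici 0) t = deriv φ t := fun t ht =>
    derivWithin_of_mem_nhds (Ici_mem_nhds ht)
  have hm : Continuous (fun t : ℝ => derivWithin φ (Ici 0) (max t 0)) :=
    hc.comp_continuous (by fun_prop) (fun t => le_max_right t 0)
  refine kappa_aux γ₁ γ₂ φ _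
    (fun t => Real.sqrt (derivWithin φ (Ici 0) (max t 0) * (max t 0))) h ?_ ?_ ?_ ?_
  · intro t ht
    simp only [max_eq_left ht.le, heq t ht]
  · simp
  · exact Real.continuous_sqrt.comp (hm.mul (by fun_prop))
  · intro t ht
    apply intervalIntegral.integral_congr
    intro s hs
    rw [uIcc_of_le ht] at hs
    rcases hs.1.eq_or_lt with h0 | h0
    · simp [← h0]
    · simp only [max_eq_left h0.le, heq s h0]

end
end

section
/- Let ψ be a regular N-function such that both ψ and its conjugate ψ* satisfy the Δ₂-condition. Then the family of shifted N-functions ψ_a, a ≥ 0, satisfies the Δ₂-condition uniformly in a: there exists a constant K > 2, depending only on Δ₂(ψ), such that ψ_a(2t) ≤ K·ψ_a(t) for all t ≥ 0 and all a ≥ 0. -/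
open Real Filter Set Topology

noncomputable section

/-- The derivative of an N-function is nonnegative, monotone and doubling. -/
theorem deriv_facts (ψ : ℝ → ℝ) (K : ℝ) (h : IsRegularNFunction ψ)
    (hK : SatisfiesDelta2 ψ K) :
    (∀ x > 0, 0 ≤ deriv ψ x) ∧ (∀ x > 0, ∀ y, x ≤ y → deriv ψ x ≤ deriv ψ y) ∧
    (∀ x > 0, 2 * deriv ψ (2 * x) ≤ K ^ 2 * deriv ψ x) := by
  obtain ⟨⟨hc, h0, hpos, -, -⟩, -, h2, -⟩ := h
  obtain ⟨hK2, hd⟩ := hK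
  have hdiff : ∀ x > 0, DifferentiableAt ℝ ψ x := fun x hx =>
    (h2.differentiableOn (by norm_num)).differentiableAt (Ioi_mem_nhds hx)
  have hlow : ∀ x > 0, ψ x ≤ x * deriv ψ x := by
    intro x hx
    have := hc.slope_le_deriv (x := 0) (y := x) (by simp) (by simpa using hx.le) hx (hdiff x hx)
    rw [slope_def_field, h0, sub_zero, sub_zero, div_le_iff₀ hx] at this
    linarith
  have hup : ∀ x > 0, ∀ y, x < y → deriv ψ x * (y - x) ≤ ψ y - ψ x := by
    intro x hx y hy
    have := hc.deriv_le_slope (x := x) (y := y) (by simpa using hx.le)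
      (by simpa using (hx.trans hy).le) hy (hdiff x hx)
    rwa [slope_def_field, le_div_iff₀ (by linarith)] at this
  refine ⟨?_, ?_, ?_⟩
  · intro x hx
    have h1 := hlow x hx
    have h2 := hpos x hx
    by_contra hn
    push Not at hn
    nlinarith
  · intro x hx y hy
    rcases hy.eq_or_lt with rfl | hy
    · rfl
    have h1 := hc.deriv_le_slope (x := x) (y := y) (by simpa using hx.le)
      (by simpa using (hx.trans hy).le) hy (hdiff x hx)
    have h2 := hc.slope_le_deriv (x := x) (y := y) (by simpa using hx.le)
      (by simpa using (hx.trans hy).le) hy (hdiff y (hx.trans hy))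
    exact h1.trans h2
  · intro x hx
    have h1 := hup (2 * x) (by linarith) (2 * (2 * x)) (by linarith)
    have h3 := hd (2 * x) (by linarith)
    have h4 := hd x hx.le
    have h5 := hpos (2 * x) (by linarith)
    have h6 := hlow x hx
    have h7 : K * ψ (2 * x) ≤ K * (K * ψ x) := mul_le_mul_of_nonneg_left h4 (by linarith)
    have h8 : K ^ 2 * ψ x ≤ K ^ 2 * (x * deriv ψ x) := mul_le_mul_of_nonneg_left h6 (by positivity)
    have h9 : x * (2 * deriv ψ (2 * x)) ≤ x * (K ^ 2 * deriv ψ x) := by nlinarith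
    exact le_of_mul_le_mul_left h9 hx

/-- the shifted N-functions `ψ_a`, `a ≥ 0`, satisfy the Δ₂-condition
uniformly in `a`, with constant depending only on the Δ₂-constant of `ψ`. -/
theorem shifted_delta2_uniform (K₁ : ℝ) :
    ∃ K > (2:ℝ), ∀ ψ : ℝ → ℝ, ∀ K₂ : ℝ, IsRegularNFunction ψ →
      SatisfiesDelta2 ψ K₁ → SatisfiesDelta2 (conjNF ψ) K₂ →
      ∀ a ≥ (0:ℝ), ∀ t ≥ (0:ℝ), shiftNF ψ a (2 * t) ≤ K * shiftNF ψ a t := by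
  refine ⟨2 * K₁ ^ 2 + 3, by nlinarith [sq_nonneg K₁], ?_⟩
  intro ψ K₂ hψ hK₁ _ a ha t ht
  obtain ⟨hn, hm, hd⟩ := deriv_facts ψ K₁ hψ hK₁
  have hg : ∀ s, 0 ≤ s → 0 ≤ shiftDF ψ a s := by
    intro s hs
    rcases hs.eq_or_lt with rfl | hs
    · simp [shiftDF]
    have := hn (a + s) (by linarith)
    unfold shiftDF
    positivity
  have hI : 0 ≤ shiftNF ψ a t := by
    unfold shiftNF
    exact intervalIntegral.integral_nonneg ht (fun s hs => hg s hs.1)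
  by_cases hint : IntervalIntegrable (shiftDF ψ a) MeasureTheory.volume 0 (2 * t)
  swap
  · have : shiftNF ψ a (2 * t) = 0 := intervalIntegral.integral_undef hint
    rw [this]
    positivity
  have hint1 : IntervalIntegrable (shiftDF ψ a) MeasureTheory.volume 0 t := by
    refine hint.mono_set ?_
    rw [uIcc_of_le ht, uIcc_of_le (by linarith)]
    exact Icc_subset_Icc le_rfl (by linarith)
  have hint2 : IntervalIntegrable (fun s => shiftDF ψ a (2 * s)) MeasureTheory.volume 0 t := by
    have := hint.comp_mul_left (c := 2)
    simpa using this
  have hpt : ∀ s ∈ Icc 0 t, shiftDF ψ a (2 * s) ≤ K₁ ^ 2 * shiftDF ψ a s := by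
    intro s hs
    rcases hs.1.eq_or_lt with rfl | hs
    · simp [shiftDF]
    have has : 0 < a + s := by linarith
    have h1 : deriv ψ (a + 2 * s) ≤ deriv ψ (2 * (a + s)) := hm _ (by linarith) _ (by linarith)
    have h2 := hd (a + s) has
    have h3 := hn (a + 2 * s) (by linarith)
    unfold shiftDF
    calc deriv ψ (a + 2 * s) * (2 * s) / (a + 2 * s)
        ≤ deriv ψ (a + 2 * s) * (2 * s) / (a + s) := by
          apply div_le_div_of_nonneg_left _ has (by linarith)
          positivity
      _ ≤ (K₁ ^ 2 * deriv ψ (a + s)) * s / (a + s) := by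
          apply div_le_div_of_nonneg_right _ has.le
          nlinarith
      _ = _ := by ring
  have hmono : ∫ s in (0:ℝ)..t, shiftDF ψ a (2 * s) ≤ ∫ s in (0:ℝ)..t, K₁ ^ 2 * shiftDF ψ a s :=
    intervalIntegral.integral_mono_on ht hint2 (hint1.const_mul _) hpt
  rw [intervalIntegral.integral_const_mul] at hmono
  have hch := intervalIntegral.mul_integral_comp_mul_left (f := shiftDF ψ a) (a := 0) (b := t) (c := 2)
  rw [mul_zero] at hch
  unfold shiftNF at hI ⊢
  rw [← hch]
  nlinarith

end
end

section
/- Let ψ be a regular N-function satisfying the Δ₂-condition, and for a ≥ 0 set ψ'_a(t) := ψ'(a+t)·t/(a+t). Then there exists a constant c > 0, depending only on Δ₂(ψ), such that for every d, n ≥ 1, every P, Q ∈ ℝ^{d×n} and every t ≥ 0: ψ'_{|P|}(t) ≤ c·ψ'_{|Q|}(t) + c·ψ'_{|P|}(|P−Q|), where |·| denotes the Frobenius norm on ℝ^{d×n}. -/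
open Real Filter Set Topology

noncomputable section

lemma frob_eq_aux {d n : ℕ} (P : Fin d → Fin n → ℝ) :
    frobNorm P = ‖(WithLp.toLp 2 (fun x : Fin d × Fin n => P x.1 x.2) :
      EuclideanSpace ℝ (Fin d × Fin n))‖ := by
  rw [EuclideanSpace.norm_eq, Fintype.sum_prod_type]
  simp [frobNorm]

lemma frob_abs_aux {d n : ℕ} (P Q : Fin d → Fin n → ℝ) :
    |frobNorm P - frobNorm Q| ≤ frobNorm (P - Q) := by
  rw [frob_eq_aux P, frob_eq_aux Q, frob_eq_aux (P - Q)]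
  exact abs_norm_sub_norm_le _ _

lemma reg_diff_aux {ψ : ℝ → ℝ} (h : IsRegularNFunction ψ) {t : ℝ} (ht : 0 < t) :
    DifferentiableAt ℝ ψ t :=
  (h.2.2.1.differentiableOn (by norm_num)).differentiableAt (Ioi_mem_nhds ht)

lemma reg_slope_le_aux {ψ : ℝ → ℝ} (h : IsRegularNFunction ψ) {x y : ℝ} (hx : 0 ≤ x)
    (hxy : x < y) : ψ y - ψ x ≤ deriv ψ y * (y - x) := by
  have := h.1.1.slope_le_deriv (mem_Ici.2 hx) (mem_Ici.2 (hx.trans hxy.le)) hxy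
    (reg_diff_aux h (hx.trans_lt hxy))
  rw [slope_def_field, div_le_iff₀ (by linarith)] at this
  exact this

lemma reg_le_slope_aux {ψ : ℝ → ℝ} (h : IsRegularNFunction ψ) {x y : ℝ} (hx : 0 < x)
    (hxy : x < y) : deriv ψ x * (y - x) ≤ ψ y - ψ x := by
  have := h.1.1.deriv_le_slope (mem_Ici.2 hx.le) (mem_Ici.2 (hx.le.trans hxy.le)) hxy
    (reg_diff_aux h hx)
  rw [slope_def_field, le_div_iff₀ (by linarith)] at this
  exact this

lemma reg_mono_aux {ψ : ℝ → ℝ} (h : IsRegularNFunction ψ) {x y : ℝ} (hx : 0 < x)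
    (hxy : x ≤ y) : deriv ψ x ≤ deriv ψ y := by
  rcases hxy.eq_or_lt with rfl | hlt
  · exact le_rfl
  · exact le_of_mul_le_mul_right
      ((reg_le_slope_aux h hx hlt).trans (reg_slope_le_aux h hx.le hlt)) (by linarith)

lemma reg_nonneg_aux {ψ : ℝ → ℝ} (h : IsRegularNFunction ψ) {x : ℝ} (hx : 0 < x) :
    0 ≤ deriv ψ x := by
  have h1 := reg_slope_le_aux h le_rfl hx
  have h2 := h.1.2.2.1 x hx
  rw [h.1.2.1] at h1
  by_contra hc
  nlinarith

lemma reg_double_aux {ψ : ℝ → ℝ} (h : IsRegularNFunction ψ) {K : ℝ}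
    (hK : SatisfiesDelta2 ψ K) {u : ℝ} (hu : 0 < u) :
    deriv ψ (2 * u) ≤ K ^ 2 * deriv ψ u := by
  have hK0 := hK.1
  have h1 := reg_slope_le_aux h le_rfl hu
  rw [h.1.2.1] at h1
  have h2 := reg_le_slope_aux h (x := 2 * u) (y := 2 * (2 * u)) (by linarith) (by linarith)
  have h3 := hK.2 (2 * u) (by linarith)
  have h4 := hK.2 u hu.le
  have h5 := h.1.2.2.1 (2 * u) (by linarith)
  have h6 : K * ψ (2 * u) ≤ K * (K * ψ u) := mul_le_mul_of_nonneg_left h4 (by linarith)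
  have h7 : K ^ 2 * ψ u ≤ K ^ 2 * (deriv ψ u * u) :=
    mul_le_mul_of_nonneg_left (by linarith) (sq_nonneg K)
  have h8 := reg_nonneg_aux h (x := 2 * u) (by linarith)
  have h9 := mul_nonneg h8 hu.le
  refine le_of_mul_le_mul_right ?_ hu
  nlinarith

lemma shift_nonneg_aux {ψ : ℝ → ℝ} (h : IsRegularNFunction ψ) {a t : ℝ} (ha : 0 ≤ a)
    (ht : 0 ≤ t) : 0 ≤ shiftDF ψ a t := by
  unfold shiftDF
  rcases (add_nonneg ha ht).eq_or_lt with h0 | h0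
  · rw [← h0]; simp
  · have := reg_nonneg_aux h h0
    positivity

/-- `ψ'_{|P|}(t) ≤ c·ψ'_{|Q|}(t) + c·ψ'_{|P|}(|P−Q|)` with `c`
depending only on the Δ₂-constant of `ψ`. -/
theorem shift_deriv_change (K₁ : ℝ) :
    ∃ c > (0:ℝ), ∀ ψ : ℝ → ℝ, IsRegularNFunction ψ → SatisfiesDelta2 ψ K₁ →
      ∀ d n : ℕ, 1 ≤ d → 1 ≤ n → ∀ P Q : Fin d → Fin n → ℝ, ∀ t ≥ (0:ℝ),
        shiftDF ψ (frobNorm P) t ≤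
          c * shiftDF ψ (frobNorm Q) t + c * shiftDF ψ (frobNorm P) (frobNorm (P - Q)) := by
  refine ⟨2 * K₁ ^ 2 + 1, by positivity, ?_⟩
  intro ψ h hK d n _ _ P Q t ht
  have hs := abs_le.1 (frob_abs_aux P Q)
  have hp : 0 ≤ frobNorm P := Real.sqrt_nonneg _
  have hq : 0 ≤ frobNorm Q := Real.sqrt_nonneg _
  have hs0 : 0 ≤ frobNorm (P - Q) := Real.sqrt_nonneg _
  generalize frobNorm P = p at *
  generalize frobNorm Q = q at *
  generalize frobNorm (P - Q) = s at *
  have n1 := shift_nonneg_aux h hq ht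
  have n2 := shift_nonneg_aux h hp hs0
  have m1 := mul_nonneg (sq_nonneg K₁) n1
  have m2 := mul_nonneg (sq_nonneg K₁) n2
  rcases ht.eq_or_lt with h0 | h0
  · have : shiftDF ψ p t = 0 := by rw [← h0]; simp [shiftDF]
    nlinarith
  rcases le_or_gt t s with hts | hts
  · have : shiftDF ψ p t ≤ shiftDF ψ p s := by
      unfold shiftDF
      rw [mul_div_assoc, mul_div_assoc]
      refine mul_le_mul (reg_mono_aux h (by linarith) (by linarith)) ?_ (by positivity)
        (reg_nonneg_aux h (by linarith))
      rw [div_le_div_iff₀ (by linarith) (by linarith)]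
      nlinarith
    nlinarith
  · have : shiftDF ψ p t ≤ 2 * K₁ ^ 2 * shiftDF ψ q t := by
      unfold shiftDF
      have e1 : deriv ψ (p + t) ≤ K₁ ^ 2 * deriv ψ (q + t) :=
        (reg_mono_aux h (by linarith) (by linarith)).trans
          (reg_double_aux h hK (u := q + t) (by linarith))
      have e2 : t / (p + t) ≤ 2 * (t / (q + t)) := by
        rw [← mul_div_assoc, div_le_div_iff₀ (by linarith) (by linarith)]
        nlinarith
      have e3 := reg_nonneg_aux h (x := q + t) (by linarith)
      calc deriv ψ (p + t) * t / (p + t) = deriv ψ (p + t) * (t / (p + t)) := by ring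
        _ ≤ (K₁ ^ 2 * deriv ψ (q + t)) * (2 * (t / (q + t))) :=
          mul_le_mul e1 e2 (by positivity) (by positivity)
        _ = _ := by ring
    nlinarith

end
end

section
/- Let ψ be a regular N-function satisfying the Δ₂-condition, and for a ≥ 0 set ψ'_a(t) := ψ'(a+t)·t/(a+t). Then there exist constants c, C > 0, depending only on Δ₂(ψ), such that for every d, n ≥ 1 and all P, Q ∈ ℝ^{d×n}: c·ψ'_{|P|}(|P−Q|) ≤ ψ'_{|Q|}(|P−Q|) ≤ C·ψ'_{|P|}(|P−Q|), where |·| denotes the Frobenius norm on ℝ^{d×n}. -/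
open Real Filter Set Topology

noncomputable section

theorem aux_core (ψ : ℝ → ℝ) (K : ℝ) (h : IsRegularNFunction ψ) (hK : SatisfiesDelta2 ψ K)
    (x y t : ℝ) (hx : 0 < x) (hy : 0 < y) (hyx : y ≤ 2 * x) (hxy : x ≤ 2 * y) (ht : 0 ≤ t) :
    deriv ψ y * t / y ≤ K ^ 2 * (deriv ψ x * t / x) := by
  obtain ⟨⟨hconv, h0, hpos, -, -⟩, -, h2, -⟩ := h
  obtain ⟨hK2, hD⟩ := hK
  have hd : ∀ s : ℝ, 0 < s → HasDerivAt ψ (deriv ψ s) s := fun s hs =>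
    ((h2.differentiableOn (by norm_num)).differentiableAt (Ioi_mem_nhds hs)).hasDerivAt
  have hA : ∀ s : ℝ, 0 < s → ψ s ≤ s * deriv ψ s := by
    intro s hs
    have := hconv.slope_le_of_hasDerivAt (x := 0) (y := s) (by simp) (by simpa using hs.le) hs (hd s hs)
    rw [slope_def_field, h0, div_le_iff₀ (by linarith)] at this
    linarith
  have hB : deriv ψ y * (4 * x - y) ≤ ψ (4 * x) - ψ y := by
    have := hconv.le_slope_of_hasDerivAt (x := y) (y := 4 * x) (by simpa using hy.le)
      (by simp; linarith) (by linarith) (hd y hy)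
    rw [slope_def_field, le_div_iff₀ (by linarith)] at this
    linarith
  have e1 : ψ (4 * x) ≤ K * ψ (2 * x) := by
    have := hD (2 * x) (by linarith)
    rwa [show 2 * (2 * x) = 4 * x by ring] at this
  have e2 : K * ψ (2 * x) ≤ K * (K * ψ x) :=
    mul_le_mul_of_nonneg_left (hD x hx.le) (by linarith)
  have e3 : K ^ 2 * ψ x ≤ K ^ 2 * (x * deriv ψ x) :=
    mul_le_mul_of_nonneg_left (hA x hx) (by positivity)
  have hy0 : 0 ≤ deriv ψ y := by
    have h1 := hA y hy
    have h3 := hpos y hy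
    by_contra hn
    push Not at hn
    nlinarith
  have e4 : deriv ψ y * (2 * x) ≤ deriv ψ y * (4 * x - y) :=
    mul_le_mul_of_nonneg_left (by linarith) hy0
  have hyp := hpos y hy
  have e5 : deriv ψ y * x ≤ K ^ 2 * (y * deriv ψ x) := by
    have hx0 : 0 ≤ deriv ψ x := by
      have h1 := hA x hx
      have h3 := hpos x hx
      by_contra hn
      push Not at hn
      nlinarith
    have e6 : K ^ 2 * deriv ψ x * x ≤ K ^ 2 * deriv ψ x * (2 * y) :=
      mul_le_mul_of_nonneg_left hxy (by positivity)
    nlinarith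
  rw [← mul_div_assoc, div_le_div_iff₀ hy hx]
  have := mul_le_mul_of_nonneg_right e5 ht
  linarith

theorem aux_norm {d n : ℕ} (P : Fin d → Fin n → ℝ) :
    frobNorm P = ‖WithLp.toLp 2 (fun k : Fin d × Fin n => P k.1 k.2)‖ := by
  rw [EuclideanSpace.norm_eq, frobNorm, Fintype.sum_prod_type]
  simp

theorem aux_shift (ψ : ℝ → ℝ) (K : ℝ) (h : IsRegularNFunction ψ) (hK : SatisfiesDelta2 ψ K)
    (p q t : ℝ) (hp : 0 ≤ p) (hq : 0 ≤ q) (ht : 0 ≤ t) (hpq : p ≤ q + t) (hqp : q ≤ p + t) :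
    shiftDF ψ q t ≤ K ^ 2 * shiftDF ψ p t := by
  rcases ht.eq_or_lt with rfl | ht'
  · simp [shiftDF]
  · exact aux_core ψ K h hK (p + t) (q + t) t (by linarith) (by linarith) (by linarith)
      (by linarith) ht

theorem aux_tri {d n : ℕ} (P Q : Fin d → Fin n → ℝ) :
    frobNorm P ≤ frobNorm Q + frobNorm (P - Q) ∧ frobNorm Q ≤ frobNorm P + frobNorm (P - Q) := by
  have e : WithLp.toLp 2 (fun k : Fin d × Fin n => (P - Q) k.1 k.2)
      = WithLp.toLp 2 (fun k : Fin d × Fin n => P k.1 k.2)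
        - WithLp.toLp 2 (fun k : Fin d × Fin n => Q k.1 k.2) := rfl
  rw [aux_norm, aux_norm, aux_norm, e]
  exact ⟨norm_le_norm_add_norm_sub' _ _, norm_le_norm_add_norm_sub _ _⟩

/-- `ψ'_{|Q|}(|P−Q|) ∼ ψ'_{|P|}(|P−Q|)` uniformly in `P, Q`, with
constants depending only on the Δ₂-constant of `ψ`. -/
theorem shift_deriv_equiv (K₁ : ℝ) :
    ∃ c > (0:ℝ), ∃ C > (0:ℝ), ∀ ψ : ℝ → ℝ, IsRegularNFunction ψ → SatisfiesDelta2 ψ K₁ →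
      ∀ d n : ℕ, 1 ≤ d → 1 ≤ n → ∀ P Q : Fin d → Fin n → ℝ,
        c * shiftDF ψ (frobNorm P) (frobNorm (P - Q)) ≤
            shiftDF ψ (frobNorm Q) (frobNorm (P - Q)) ∧
          shiftDF ψ (frobNorm Q) (frobNorm (P - Q)) ≤
            C * shiftDF ψ (frobNorm P) (frobNorm (P - Q)) := by
  refine ⟨(K₁ ^ 2 + 1)⁻¹, by positivity, K₁ ^ 2 + 1, by positivity, ?_⟩
  intro ψ h hK d n _ _ P Q
  have hP : 0 ≤ frobNorm P := Real.sqrt_nonneg _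
  have hQ : 0 ≤ frobNorm Q := Real.sqrt_nonneg _
  have hT : 0 ≤ frobNorm (P - Q) := Real.sqrt_nonneg _
  obtain ⟨t1, t2⟩ := aux_tri P Q
  have h1 := aux_shift ψ K₁ h hK _ _ _ hP hQ hT t1 t2
  have h2 := aux_shift ψ K₁ h hK _ _ _ hQ hP hT t2 t1
  have hK2 : 0 < K₁ ^ 2 := by have := hK.1; positivity
  have h4 : 4 < K₁ ^ 2 := by nlinarith [hK.1]
  have n1 : 0 ≤ shiftDF ψ (frobNorm P) (frobNorm (P - Q)) := by
    have h3 := aux_shift ψ K₁ h hK _ _ _ hP hP hT (by linarith) (by linarith)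
    by_contra hn
    push Not at hn
    nlinarith
  have n2 : 0 ≤ shiftDF ψ (frobNorm Q) (frobNorm (P - Q)) := by
    have h3 := aux_shift ψ K₁ h hK _ _ _ hQ hQ hT (by linarith) (by linarith)
    by_contra hn
    push Not at hn
    nlinarith
  refine ⟨?_, by linarith⟩
  rw [inv_mul_le_iff₀ (by positivity)]
  linarith

end
end

section
/- Let ψ be a regular N-function such that both ψ and its conjugate ψ* satisfy the Δ₂-condition. Then there exist constants c, C > 0, depending only on Δ₂(ψ) and Δ₂(ψ*), such that for every d, n ≥ 1 and all P, Q ∈ ℝ^{d×n}: c·ψ_{|P|}(|P−Q|) ≤ ψ_{|Q|}(|P−Q|) ≤ C·ψ_{|P|}(|P−Q|), where |·| is the Frobenius norm on ℝ^{d×n}. -/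
open Real Filter Set Topology

noncomputable section

theorem aux_diff {ψ : ℝ → ℝ} (h : IsRegularNFunction ψ) {x : ℝ} (hx : 0 < x) :
    DifferentiableAt ℝ ψ x :=
  (h.2.2.1.differentiableOn (by norm_num)).differentiableAt (Ioi_mem_nhds hx)

theorem aux_mono {ψ : ℝ → ℝ} (h : IsRegularNFunction ψ) : MonotoneOn (deriv ψ) (Set.Ioi 0) :=
  (h.1.1.subset Set.Ioi_subset_Ici_self (convex_Ioi 0)).monotoneOn_deriv
    (fun _ hx => aux_diff h hx)

theorem aux_lower {ψ : ℝ → ℝ} (h : IsRegularNFunction ψ) {x : ℝ} (hx : 0 < x) :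
    ψ x ≤ x * deriv ψ x := by
  have := h.1.1.slope_le_deriv (x := 0) (y := x) (by simp) (by simpa using hx.le) hx (aux_diff h hx)
  rw [slope_def_field, h.1.2.1, div_le_iff₀ (by linarith)] at this
  linarith

theorem aux_pos {ψ : ℝ → ℝ} (h : IsRegularNFunction ψ) {x : ℝ} (hx : 0 < x) :
    0 < deriv ψ x := by
  have h1 := aux_lower h hx
  have h2 := h.1.2.2.1 x hx
  exact pos_of_mul_pos_right (h2.trans_le h1) hx.le

theorem aux_upper {ψ : ℝ → ℝ} (h : IsRegularNFunction ψ) {x : ℝ} (hx : 0 < x) :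
    x * deriv ψ x ≤ ψ (2 * x) := by
  have := h.1.1.deriv_le_slope (x := x) (y := 2 * x) (by simpa using hx.le)
    (by simpa using hx.le) (by linarith) (aux_diff h hx)
  rw [slope_def_field, le_div_iff₀ (by linarith)] at this
  have h2 := h.1.2.2.1 x hx
  linarith

theorem aux_quad {ψ : ℝ → ℝ} {K : ℝ} (h : IsRegularNFunction ψ) (hK : SatisfiesDelta2 ψ K)
    {x : ℝ} (hx : 0 < x) : 4 * deriv ψ (4 * x) ≤ K ^ 3 * deriv ψ x := by
  have h1 := aux_upper h (x := 4 * x) (by linarith)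
  have h2 := hK.2 (4 * x) (by linarith)
  have h3 := hK.2 (2 * x) (by linarith)
  have h4 := hK.2 x hx.le
  have h5 := aux_lower h hx
  have hK0 : 0 < K := by linarith [hK.1]
  rw [show 2 * (2 * x) = 4 * x by ring] at h3
  have h6 : ψ (2 * (4 * x)) ≤ K ^ 3 * (x * deriv ψ x) := calc
    ψ (2 * (4 * x)) ≤ K * ψ (4 * x) := h2
    _ ≤ K * (K * (K * (x * deriv ψ x))) := by
      gcongr
      refine h3.trans ?_
      gcongr
      refine h4.trans ?_
      gcongr
    _ = _ := by ring
  have : x * (4 * deriv ψ (4 * x)) ≤ x * (K ^ 3 * deriv ψ x) := by linarith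
  exact le_of_mul_le_mul_left this hx

theorem aux_shift_mono {ψ : ℝ → ℝ} (h : IsRegularNFunction ψ) {a : ℝ} (ha : 0 ≤ a) (t : ℝ) :
    MonotoneOn (shiftDF ψ a) (Set.Icc 0 t) := by
  intro x hx y hy hxy
  unfold shiftDF
  rcases hx.1.eq_or_lt with h0 | h0
  · subst h0
    simp only [mul_zero, zero_div]
    rcases hy.1.eq_or_lt with h1 | h1
    · subst h1; simp
    · have := aux_pos h (x := a + y) (by linarith)
      positivity
  · have hy0 : 0 < y := by linarith
    have hD : deriv ψ (a + x) ≤ deriv ψ (a + y) :=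
      aux_mono h (by simp; linarith) (by simp; linarith) (by linarith)
    have hp := aux_pos h (x := a + x) (by linarith)
    have hq : x / (a + x) ≤ y / (a + y) := by
      rw [div_le_div_iff₀ (by linarith) (by linarith)]
      nlinarith
    rw [mul_div_assoc, mul_div_assoc]
    have : 0 ≤ x / (a + x) := by positivity
    exact mul_le_mul hD hq this (hp.le.trans hD)

theorem aux_int {f : ℝ → ℝ} {t : ℝ} (ht : 0 ≤ t) (hf : MonotoneOn f (Set.Icc 0 t))
    (h0 : f 0 = 0) : (∫ s in (0:ℝ)..t, f s) ≤ t * f t ∧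
      t / 2 * f (t / 2) ≤ ∫ s in (0:ℝ)..t, f s := by
  have hi : IntervalIntegrable f MeasureTheory.volume 0 t :=
    MonotoneOn.intervalIntegrable (by rwa [Set.uIcc_of_le ht])
  have hi1 : IntervalIntegrable f MeasureTheory.volume 0 (t / 2) :=
    MonotoneOn.intervalIntegrable (by
      rw [Set.uIcc_of_le (by linarith)]
      exact hf.mono (Set.Icc_subset_Icc le_rfl (by linarith)))
  have hi2 : IntervalIntegrable f MeasureTheory.volume (t / 2) t :=
    MonotoneOn.intervalIntegrable (by
      rw [Set.uIcc_of_le (by linarith)]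
      exact hf.mono (Set.Icc_subset_Icc (by linarith) le_rfl))
  constructor
  · have := intervalIntegral.integral_mono_on ht hi (intervalIntegrable_const (c := f t))
      (fun x hx => hf hx ⟨ht, le_rfl⟩ hx.2)
    simpa using this
  · rw [← intervalIntegral.integral_add_adjacent_intervals hi1 hi2]
    have e1 : 0 ≤ ∫ s in (0:ℝ)..(t / 2), f s := by
      apply intervalIntegral.integral_nonneg (by linarith)
      intro x hx
      rw [← h0]
      exact hf ⟨le_rfl, ht⟩ ⟨hx.1, by linarith [hx.2]⟩ hx.1
    have e2 := intervalIntegral.integral_mono_on (by linarith)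
      (intervalIntegrable_const (c := f (t / 2))) hi2
      (fun x hx => hf ⟨by linarith, by linarith⟩ ⟨by linarith [hx.1], hx.2⟩ hx.1)
    simp only [intervalIntegral.integral_const, smul_eq_mul] at e2
    linarith

theorem aux_main {ψ : ℝ → ℝ} {K : ℝ} (h : IsRegularNFunction ψ) (hK : SatisfiesDelta2 ψ K)
    {a b t : ℝ} (ha : 0 ≤ a) (hb : 0 ≤ b) (ht : 0 ≤ t) (hab : a ≤ b + t) (hba : b ≤ a + t) :
    shiftNF ψ b t ≤ 2 * |K| ^ 3 * shiftNF ψ a t := by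
  have hK0 : 0 < K := by linarith [hK.1]
  rw [abs_of_pos hK0]
  rcases ht.eq_or_lt with h0 | h0
  · subst h0; simp [shiftNF]
  have h1 := (aux_int ht (aux_shift_mono h hb t) (by simp [shiftDF])).1
  have h2 := (aux_int ht (aux_shift_mono h ha t) (by simp [shiftDF])).2
  unfold shiftNF
  refine h1.trans (le_trans ?_ (mul_le_mul_of_nonneg_left h2 (by positivity)))
  unfold shiftDF
  have hD : 4 * deriv ψ (b + t) ≤ K ^ 3 * deriv ψ (a + t / 2) := by
    have e1 := aux_quad h hK (x := a + t / 2) (by linarith)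
    have e2 : deriv ψ (b + t) ≤ deriv ψ (4 * (a + t / 2)) :=
      aux_mono h (by simp; linarith) (by simp; linarith) (by linarith)
    linarith
  have hp := aux_pos h (x := a + t / 2) (by linarith)
  have hq : 1 / (b + t) ≤ 2 / (a + t / 2) := by
    rw [div_le_div_iff₀ (by linarith) (by linarith)]
    linarith
  calc t * (deriv ψ (b + t) * t / (b + t))
      = t ^ 2 / 4 * ((4 * deriv ψ (b + t)) * (1 / (b + t))) := by ring
    _ ≤ t ^ 2 / 4 * ((K ^ 3 * deriv ψ (a + t / 2)) * (2 / (a + t / 2))) := by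
        gcongr
    _ = _ := by ring

theorem aux_frob_eq {d n : ℕ} (P : Fin d → Fin n → ℝ) :
    frobNorm P = ‖(WithLp.toLp 2 (fun p : Fin d × Fin n => P p.1 p.2) :
      EuclideanSpace ℝ (Fin d × Fin n))‖ := by
  simp [frobNorm, EuclideanSpace.norm_eq, Fintype.sum_prod_type]

theorem aux_frob_nonneg {d n : ℕ} (P : Fin d → Fin n → ℝ) : 0 ≤ frobNorm P :=
  Real.sqrt_nonneg _

theorem aux_frob_comm {d n : ℕ} (P Q : Fin d → Fin n → ℝ) :
    frobNorm (P - Q) = frobNorm (Q - P) := by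
  unfold frobNorm
  congr 1
  refine Finset.sum_congr rfl fun i _ => Finset.sum_congr rfl fun j _ => ?_
  simp only [Pi.sub_apply]
  ring

theorem aux_frob_tri {d n : ℕ} (P Q : Fin d → Fin n → ℝ) :
    frobNorm P ≤ frobNorm Q + frobNorm (P - Q) := by
  simp only [aux_frob_eq]
  refine le_trans (le_of_eq ?_) (norm_add_le _ _)
  congr 1
  ext p
  simp

/-- `ψ_{|Q|}(|P−Q|) ∼ ψ_{|P|}(|P−Q|)` uniformly in `P, Q`, with constants
depending only on the Δ₂-constants of `ψ` and `ψ*`. -/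
theorem shift_equiv (K₁ K₂ : ℝ) :
    ∃ c > (0:ℝ), ∃ C > (0:ℝ), ∀ ψ : ℝ → ℝ, IsRegularNFunction ψ →
      SatisfiesDelta2 ψ K₁ → SatisfiesDelta2 (conjNF ψ) K₂ →
      ∀ d n : ℕ, 1 ≤ d → 1 ≤ n → ∀ P Q : Fin d → Fin n → ℝ,
        c * shiftNF ψ (frobNorm P) (frobNorm (P - Q)) ≤
            shiftNF ψ (frobNorm Q) (frobNorm (P - Q)) ∧
          shiftNF ψ (frobNorm Q) (frobNorm (P - Q)) ≤
            C * shiftNF ψ (frobNorm P) (frobNorm (P - Q)) := by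
  have hC : (0:ℝ) < 2 * |K₁| ^ 3 + 1 := by positivity
  have key : ∀ ψ : ℝ → ℝ, IsRegularNFunction ψ → SatisfiesDelta2 ψ K₁ →
      ∀ d n : ℕ, ∀ P Q : Fin d → Fin n → ℝ,
        shiftNF ψ (frobNorm Q) (frobNorm (P - Q)) ≤
          (2 * |K₁| ^ 3 + 1) * shiftNF ψ (frobNorm P) (frobNorm (P - Q)) := by
    intro ψ h hK d n P Q
    have hnn : 0 ≤ shiftNF ψ (frobNorm P) (frobNorm (P - Q)) := by
      unfold shiftNF
      apply intervalIntegral.integral_nonneg (aux_frob_nonneg _)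
      intro x hx
      have := aux_shift_mono h (aux_frob_nonneg P) x ⟨le_rfl, hx.1⟩ ⟨hx.1, le_rfl⟩ hx.1
      simpa [shiftDF] using this
    have h1 := aux_frob_tri P Q
    have h2 := aux_frob_tri Q P
    rw [aux_frob_comm Q P] at h2
    have := aux_main h hK (aux_frob_nonneg P) (aux_frob_nonneg Q) (aux_frob_nonneg (P - Q)) h1 h2
    linarith
  refine ⟨(2 * |K₁| ^ 3 + 1)⁻¹, inv_pos.mpr hC, 2 * |K₁| ^ 3 + 1, hC, ?_⟩
  intro ψ h hK _ d n _ _ P Q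
  refine ⟨?_, key ψ h hK d n P Q⟩
  rw [inv_mul_le_iff₀ hC]
  have := key ψ h hK d n Q P
  rwa [aux_frob_comm Q P] at this

end
end
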